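/- A De Morgan clone C with DMA ⊆ C contains a binary non-persistent function if and only if C contains one of the binary functions mhnp², mnp²₁, mnp²₂, mnp²₃, mnp²₄. Moreover, C contains a binary function which is harmonious and non-persistent if and only if C contains mhnp². -/

import Mathlib

set_option autoImplicit false

/-- The four truth values of the Belnap–Dunn logic. -/
inductive DM4 : Type
  | t
  | f
  | n
  | b
deriving DecidableEq

namespace DM4

/-- De Morgan negation. -/
def neg : DM4 → DM4
  | t => f
  | f => t
  | n => n
  | b => b

/-- Conflation. -/
def conf : DM4 → DM4
  | t => t
  | f => f
  | n => b
  | b => n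

/-- Meet in the truth order. -/
def meet : DM4 → DM4 → DM4
  | f, _ => f
  | _, f => f
  | t, y => y
  | x, t => x
  | n, n => n
  | b, b => b
  | n, b => f
  | b, n => f

/-- Join in the truth order. -/
def join : DM4 → DM4 → DM4
  | t, _ => t
  | _, t => t
  | f, y => y
  | x, f => x
  | n, n => n
  | b, b => b
  | n, b => t
  | b, n => t

/-- Meet in the information order (⊗). -/
def imeet : DM4 → DM4 → DM4
  | n, _ => n
  | _, n => n
  | b, y => y
  | x, b => x
  | t, t => t
  | f, f => f
  | t, f => n
  | f, t => n

/-- Join in the information order (⊕). -/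
def ijoin : DM4 → DM4 → DM4
  | b, _ => b
  | _, b => b
  | n, y => y
  | x, n => x
  | t, t => t
  | f, f => f
  | t, f => b
  | f, t => b

/-- The truth order: least element `f`, greatest element `t`, with `n`, `b` incomparable. -/
def tle (x y : DM4) : Prop := x = y ∨ x = f ∨ y = t

/-- The information order: least element `n`, greatest element `b`, with `t`, `f` incomparable. -/
def ile (x y : DM4) : Prop := x = y ∨ x = n ∨ y = b

/-- □: maps t to t and everything else to f. -/
def box : DM4 → DM4
  | t => t
  | _ => f

/-- ◇: maps f to f and everything else to t. -/
def diamond : DM4 → DM4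
  | f => f
  | _ => t

/-- Δ: maps t, b to t and n, f to f. -/
def delta : DM4 → DM4
  | t => t
  | b => t
  | _ => f

/-- ∇: maps t, n to t and b, f to f. -/
def nabla : DM4 → DM4
  | t => t
  | n => t
  | _ => f

/-- id_{b↦n}: maps b to n and fixes t, f, n. -/
def idbn : DM4 → DM4
  | b => n
  | x => x

/-- id_{n↦b}: maps n to b and fixes t, f, b. -/
def idnb : DM4 → DM4
  | n => b
  | x => x

/-- id_{n↦t}: maps n to t and fixes t, f, b. -/
def idnt : DM4 → DM4
  | n => t
  | x => x

/-- id_{b↦t}: maps b to t and fixes t, f, n. -/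
def idbt : DM4 → DM4
  | b => t
  | x => x

/-- t_{n↦n}: maps n to n and everything else to t. -/
def tnn : DM4 → DM4
  | n => n
  | _ => t

/-- t_{b↦b}: maps b to b and everything else to t. -/
def tbb : DM4 → DM4
  | b => b
  | _ => t

/-- The binary function pbp²₁. -/
def pbp1 : DM4 → DM4 → DM4
  | t, t => t | t, f => f | t, n => f | t, b => b
  | f, t => t | f, f => f | f, n => f | f, b => b
  | n, t => t | n, f => f | n, n => n | n, b => b
  | b, t => b | b, f => f | b, n => f | b, b => b

/-- The binary function pbp²₂. -/
def pbp2 : DM4 → DM4 → DM4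
  | t, t => t | t, f => f | t, n => n | t, b => f
  | f, t => t | f, f => f | f, n => n | f, b => f
  | n, t => n | n, f => f | n, n => n | n, b => f
  | b, t => t | b, f => f | b, n => n | b, b => b

/-- The binary function mnh²₁. -/
def mnh1 : DM4 → DM4 → DM4
  | t, t => f | t, f => f | t, n => n | t, b => b
  | f, t => f | f, f => f | f, n => n | f, b => b
  | n, t => f | n, f => f | n, n => n | n, b => f
  | b, t => f | b, f => f | b, n => n | b, b => b

/-- The binary function mnh²₂. -/
def mnh2 : DM4 → DM4 → DM4
  | t, t => f | t, f => f | t, n => n | t, b => b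
  | f, t => f | f, f => f | f, n => n | f, b => b
  | n, t => f | n, f => f | n, n => n | n, b => b
  | b, t => f | b, f => f | b, n => f | b, b => b

/-- The binary function mhnp². -/
def mhnp2 : DM4 → DM4 → DM4
  | t, _ => t
  | f, _ => t
  | n, b => f
  | n, _ => n
  | b, n => f
  | b, _ => b

/-- The binary function mnp²₁. -/
def mnp1 : DM4 → DM4 → DM4
  | t, b => b
  | t, _ => t
  | f, b => b
  | f, _ => t
  | n, b => f
  | n, _ => n
  | b, n => f
  | b, _ => b

/-- The binary function mnp²₂. -/
def mnp2 : DM4 → DM4 → DM4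
  | t, _ => t
  | f, _ => t
  | n, _ => n
  | b, n => f
  | b, _ => b

/-- The binary function mnp²₃. -/
def mnp3 : DM4 → DM4 → DM4
  | t, n => n
  | t, _ => t
  | f, n => n
  | f, _ => t
  | n, b => f
  | n, _ => n
  | b, n => f
  | b, _ => b

/-- The binary function mnp²₄. -/
def mnp4 : DM4 → DM4 → DM4
  | t, _ => t
  | f, _ => t
  | n, b => f
  | n, _ => n
  | b, _ => b

/-- The ternary function mhnp³. -/
def mhnp3 : DM4 → DM4 → DM4 → DM4
  | _, t, _ => f
  | _, f, _ => f
  | t, n, _ => n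
  | f, n, _ => f
  | b, n, _ => f
  | n, n, b => f
  | n, n, _ => n
  | t, b, _ => b
  | f, b, _ => f
  | n, b, _ => f
  | b, b, n => f
  | b, b, _ => b

/-- The set of designated values. -/
def Des : Set DM4 := {t, b}

/-- Designatedness as a Boolean predicate. -/
def des : DM4 → Bool
  | t => true
  | b => true
  | _ => false

/-- The protoimplication →_{t-max}. -/
def tmax (x y : DM4) : DM4 :=
  match des x, des y with
  | true, false => n
  | _, _ => t

/-- The protoimplication →_{i-max}. -/
def imax (x y : DM4) : DM4 :=
  match des x, des y with
  | true, false => f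
  | _, _ => b

/-- The protoimplication ↔_{t-min}. -/
def tmin (x y : DM4) : DM4 := if x = y then b else f

/-- The protoimplication ↔_{i-min}. -/
def imin (x y : DM4) : DM4 := if x = y then t else n

/-- A binary operation is a protoimplication if it satisfies Reflexivity and Modus Ponens
with respect to the designated set {t, b}. -/
def IsProtoimplication (r : DM4 → DM4 → DM4) : Prop :=
  (∀ a : DM4, r a a ∈ Des) ∧ ∀ a c : DM4, a ∈ Des → r a c ∈ Des → c ∈ Des

/-- `DMFun k` is the type of De Morgan functions of arity `k + 1` (arities are positive). -/
abbrev DMFun (k : ℕ) : Type := (Fin (k + 1) → DM4) → DM4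

/-- Membership in the clone generated by the family of operations `S`
(`S k` is the set of generators of arity `k + 1`). -/
inductive InClone (S : ∀ k : ℕ, Set (DMFun k)) : ∀ k : ℕ, DMFun k → Prop
  | base {k : ℕ} {g : DMFun k} : g ∈ S k → InClone S k g
  | proj {k : ℕ} (i : Fin (k + 1)) : InClone S k (fun x => x i)
  | comp {k m : ℕ} {g : DMFun m} {h : Fin (m + 1) → DMFun k} :
      InClone S m g → (∀ i, InClone S k (h i)) →
      InClone S k (fun x => g (fun i => h i x))

/-- A family of sets of De Morgan functions is a clone if it contains all projections
and is closed under composition. -/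
structure IsClone (C : ∀ k : ℕ, Set (DMFun k)) : Prop where
  proj : ∀ (k : ℕ) (i : Fin (k + 1)), (fun x => x i) ∈ C k
  comp : ∀ (k m : ℕ) (g : DMFun m) (h : Fin (m + 1) → DMFun k),
      g ∈ C m → (∀ i, h i ∈ C k) → (fun x => g (fun i => h i x)) ∈ C k

/-- The generating family consisting of a single unary operation. -/
def op1 (g : DM4 → DM4) : ∀ k : ℕ, Set (DMFun k)
  | 0 => {fun x => g (x 0)}
  | _ + 1 => ∅

/-- The generating family consisting of a single binary operation. -/
def op2 (g : DM4 → DM4 → DM4) : ∀ k : ℕ, Set (DMFun k)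
  | 1 => {fun x => g (x 0) (x 1)}
  | _ => ∅

/-- The generating family consisting of a single ternary operation. -/
def op3 (g : DM4 → DM4 → DM4 → DM4) : ∀ k : ℕ, Set (DMFun k)
  | 2 => {fun x => g (x 0) (x 1) (x 2)}
  | _ => ∅

/-- Union of two families of operations. -/
def funion (S T : ∀ k : ℕ, Set (DMFun k)) : ∀ k : ℕ, Set (DMFun k) := fun k => S k ∪ T k

infixr:65 " ⊹ " => funion

/-- The generators of DLat: ∧, ∨, t, f (constants as unary constant functions). -/
def DLatGen : ∀ k : ℕ, Set (DMFun k) :=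
  op2 meet ⊹ op2 join ⊹ op1 (fun _ => t) ⊹ op1 (fun _ => f)

/-- The generators of DMA: ∧, ∨, t, f, −. -/
def DMAGen : ∀ k : ℕ, Set (DMFun k) := DLatGen ⊹ op1 neg

/-- The generators of BiLat: ∧, ∨, t, f, ⊗, ⊕, n, b. -/
def BiLatGen : ∀ k : ℕ, Set (DMFun k) :=
  DLatGen ⊹ op2 imeet ⊹ op2 ijoin ⊹ op1 (fun _ => n) ⊹ op1 (fun _ => b)

/-- A De Morgan function is harmonious if it commutes with conflation. -/
def Harmonious {k : ℕ} (g : DMFun k) : Prop :=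
  ∀ x : Fin (k + 1) → DM4, g (fun i => conf (x i)) = conf (g x)

/-- A De Morgan function is positive if it is monotone in the componentwise truth order. -/
def Positive {k : ℕ} (g : DMFun k) : Prop :=
  ∀ x y : Fin (k + 1) → DM4, (∀ i, tle (x i) (y i)) → tle (g x) (g y)

/-- A De Morgan function is persistent if it is monotone in the componentwise
information order. -/
def Persistent {k : ℕ} (g : DMFun k) : Prop :=
  ∀ x y : Fin (k + 1) → DM4, (∀ i, ile (x i) (y i)) → ile (g x) (g y)

/-- A De Morgan function preserves a subset X of DM4 if it maps tuples from X into X. -/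
def Preserves {k : ℕ} (g : DMFun k) (X : Set DM4) : Prop :=
  ∀ x : Fin (k + 1) → DM4, (∀ i, x i ∈ X) → g x ∈ X

def B2 : Set DM4 := {t, f}
def K3 : Set DM4 := {t, n, f}
def P3 : Set DM4 := {t, b, f}

/-- A unary operation as a De Morgan function. -/
def toF1 (g : DM4 → DM4) : DMFun 0 := fun x => g (x 0)

/-- A binary operation as a De Morgan function. -/
def toF2 (g : DM4 → DM4 → DM4) : DMFun 1 := fun x => g (x 0) (x 1)

/-- A ternary operation as a De Morgan function. -/
def toF3 (g : DM4 → DM4 → DM4 → DM4) : DMFun 2 := fun x => g (x 0) (x 1) (x 2)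

/-- The clone generated by a family of operations, as a family of sets. -/
def CloneOf (S : ∀ k : ℕ, Set (DMFun k)) : ∀ k : ℕ, Set (DMFun k) :=
  fun k => {g | InClone S k g}

/-- Inclusion of families of operations. -/
def CloneLE (C D : ∀ k : ℕ, Set (DMFun k)) : Prop := ∀ k : ℕ, C k ⊆ D k

/-! A failure of persistence is a pair of points `(x, y) ⊑ (x', y')` at which `g` takes values that
are not `⊑`-related. If neither coordinate is constantly `b`, both coordinate pairs lie in the
subalgebra of `DM4 × DM4` generated by `(t, b)` and `(n, n)`, and substituting the corresponding
terms into `g` produces `k` with `k t n = t` and `k b n = f`. The operation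
`(x ∨ −x) ∧ (((x ∨ −x) ∧ (y ∨ −y)) ∨ k(x ∨ −x, y))` then forgets all of `k` except two two-valued
choices, which leaves only mhnp², mnp²₁, mnp²₂ and one operation generating mnp²₁. If some
coordinate is constantly `b`, none is constantly `n`, and conjugation by `∂`, which exchanges `n`
and `b`, reduces to the first case; it fixes mhnp² and takes mnp²₁, mnp²₂ to mnp²₃, mnp²₄. -/

/-- The binary part of a clone above DMA: a set of binary operations containing the projections and
the De Morgan operations (unary ones with a dummy second argument) and closed under composition.
The constant `f` is omitted, being `−t`. -/
structure IsBinaryClone (F : Set (DM4 → DM4 → DM4)) : Prop where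
  fst_mem : (fun x _ => x) ∈ F
  snd_mem : (fun _ y => y) ∈ F
  top_mem : (fun _ _ => t) ∈ F
  neg_mem : (fun x _ => neg x) ∈ F
  meet_mem : meet ∈ F
  join_mem : join ∈ F
  comp_mem : ∀ {g h k}, g ∈ F → h ∈ F → k ∈ F → (fun x y => g (h x y) (k x y)) ∈ F

/-- The binary members of a family of operations, in curried form. -/
def binaryPart (C : ∀ k : ℕ, Set (DMFun k)) : Set (DM4 → DM4 → DM4) := {g | toF2 g ∈ C 1}

theorem toF2_surjective : Function.Surjective toF2 := fun g =>
  ⟨fun x y => g ![x, y], funext fun x => congrArg g (by ext i; fin_cases i <;> rfl)⟩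

theorem IsClone.isBinaryClone_binaryPart {C : ∀ k : ℕ, Set (DMFun k)} (hC : IsClone C)
    (hDMA : ∀ k g, InClone DMAGen k g → g ∈ C k) : IsBinaryClone (binaryPart C) where
  fst_mem := hC.proj 1 0
  snd_mem := hC.proj 1 1
  top_mem := hC.comp 1 0 (fun _ => t) (fun _ x => x 0)
    (hDMA _ _ (.base (.inl (.inr (.inr (.inl rfl)))))) fun _ => hC.proj 1 0
  neg_mem := hC.comp 1 0 (fun x => neg (x 0)) (fun _ x => x 0)
    (hDMA _ _ (.base (.inr rfl))) fun _ => hC.proj 1 0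
  meet_mem := hDMA _ _ (.base (.inl (.inl rfl)))
  join_mem := hDMA _ _ (.base (.inl (.inr (.inl rfl))))
  comp_mem {g h k} hg hh hk := hC.comp 1 1 (toF2 g) ![toF2 h, toF2 k] hg
    (Fin.forall_fin_two.2 ⟨hh, hk⟩)

theorem ile_refl (x : DM4) : ile x x := .inl rfl

theorem conf_conf (x : DM4) : conf (conf x) = x := by
  cases x <;> rfl

theorem ile_conf_iff {x y : DM4} : ile (conf x) (conf y) ↔ ile y x := by
  cases x <;> cases y <;> simp [ile, conf]

/-- The image of a binary operation under the automorphism `∂` of the De Morgan algebra `DM4`. -/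
def conjugate (g : DM4 → DM4 → DM4) (x y : DM4) : DM4 := conf (g (conf x) (conf y))

@[simp] theorem conjugate_conjugate (g : DM4 → DM4 → DM4) : conjugate (conjugate g) = g :=
  funext₂ fun x y => by simp only [conjugate, conf_conf]

@[simp] theorem conjugate_fst : conjugate (fun x _ => x) = fun x _ => x :=
  funext₂ fun x _ => conf_conf x

@[simp] theorem conjugate_snd : conjugate (fun _ y => y) = fun _ y => y :=
  funext₂ fun _ y => conf_conf y

@[simp] theorem conjugate_top : conjugate (fun _ _ => t) = fun _ _ => t := rfl

@[simp] theorem conjugate_neg : conjugate (fun x _ => neg x) = fun x _ => neg x := by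
  funext x; cases x <;> rfl

@[simp] theorem conjugate_meet : conjugate meet = meet := by
  funext x y; cases x <;> cases y <;> rfl

@[simp] theorem conjugate_join : conjugate join = join := by
  funext x y; cases x <;> cases y <;> rfl

@[simp] theorem conjugate_comp (g h k : DM4 → DM4 → DM4) :
    conjugate (fun x y => g (h x y) (k x y)) =
      fun x y => conjugate g (conjugate h x y) (conjugate k x y) :=
  funext₂ fun x y => by simp only [conjugate, conf_conf]

@[simp] theorem conjugate_mhnp2 : conjugate mhnp2 = mhnp2 := by
  funext x y; cases x <;> cases y <;> rfl

@[simp] theorem conjugate_mnp1 : conjugate mnp1 = mnp3 := by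
  funext x y; cases x <;> cases y <;> rfl

@[simp] theorem conjugate_mnp2 : conjugate mnp2 = mnp4 := by
  funext x y; cases x <;> cases y <;> rfl

theorem harmonious_toF2_iff {g : DM4 → DM4 → DM4} : Harmonious (toF2 g) ↔ conjugate g = g := by
  refine ⟨fun h => funext₂ fun x y => ?_, fun h x => ?_⟩
  · exact (congrArg conf (h ![x, y])).trans (conf_conf _)
  · exact (conf_conf _).symm.trans (congrArg conf (congrFun₂ h (x 0) (x 1)))

theorem Persistent.toF2_conjugate {g : DM4 → DM4 → DM4} (hg : Persistent (toF2 g)) :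
    Persistent (toF2 (conjugate g)) := fun x y hxy =>
  ile_conf_iff.2 (hg (conf ∘ y) (conf ∘ x) fun i => ile_conf_iff.2 (hxy i))

theorem not_persistent_of_apply_eq {g : DM4 → DM4 → DM4} (htn : g t n = t) (hbn : g b n = f) :
    ¬ Persistent (toF2 g) := by
  intro hg
  have hle : ile (g t n) (g b n) :=
    hg ![t, n] ![b, n] (Fin.forall_fin_two.2 ⟨.inr (.inr rfl), ile_refl n⟩)
  simp [htn, hbn, ile] at hle

theorem not_persistent_mhnp2 : ¬ Persistent (toF2 mhnp2) := not_persistent_of_apply_eq rfl rfl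

theorem not_persistent_mnp1 : ¬ Persistent (toF2 mnp1) := not_persistent_of_apply_eq rfl rfl

theorem not_persistent_mnp2 : ¬ Persistent (toF2 mnp2) := not_persistent_of_apply_eq rfl rfl

theorem not_persistent_mnp3 : ¬ Persistent (toF2 mnp3) := fun h =>
  not_persistent_mnp1 (by simpa [← conjugate_mnp1] using h.toF2_conjugate)

theorem not_persistent_mnp4 : ¬ Persistent (toF2 mnp4) := fun h =>
  not_persistent_mnp2 (by simpa [← conjugate_mnp2] using h.toF2_conjugate)

theorem forall_ne_b_or_forall_ne_n {x y : Fin 2 → DM4} (hxy : ∀ i, ile (x i) (y i))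
    (hne : x ≠ y) : (∀ i, x i ≠ b) ∨ ∀ i, y i ≠ n := by
  by_contra! h
  obtain ⟨⟨i, hi⟩, j, hj⟩ := h
  have hyi : y i = b := by simpa [hi, ile, eq_comm] using hxy i
  have hxj : x j = n := by simpa [hj, ile] using hxy j
  have hij : i ≠ j := by rintro rfl; simp [hi] at hxj
  refine hne (funext fun l => ?_)
  obtain rfl | rfl : l = i ∨ l = j := by omega
  · rw [hi, hyi]
  · rw [hj, hxj]

/-- `Realizes F u v` says that some member of `F` has the values `u` and `v` at the points `(t, n)`
and `(b, n)`, i.e. that `(u, v)` lies in the `F`-subalgebra of `DM4 × DM4` generated by `(t, b)`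
and `(n, n)`. -/
def Realizes (F : Set (DM4 → DM4 → DM4)) (u v : DM4) : Prop :=
  ∃ h ∈ F, h t n = u ∧ h b n = v

/-- The identification of `f` with `t`, as a De Morgan term: `x ∨ −x`. -/
def exclMid (x : DM4) : DM4 := join x (neg x)

/-- The operation equal to `x ∨ −x` except at the points `(t, n)`, `(t, b)`, `(n, b)`, `(b, n)`,
where it takes the prescribed values, and which does not distinguish `f` from `t` in its first
argument. Every one of the minimal non-persistent operations has this form. -/
def crossTable (tn tb nb bn : DM4) : DM4 → DM4 → DM4
  | t, n | f, n => tn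
  | t, b | f, b => tb
  | n, b => nb
  | b, n => bn
  | x, _ => exclMid x

theorem mhnp2_eq_crossTable : mhnp2 = crossTable t t f f := by
  funext x y; cases x <;> cases y <;> rfl

theorem mnp1_eq_crossTable : mnp1 = crossTable t b f f := by
  funext x y; cases x <;> cases y <;> rfl

theorem mnp2_eq_crossTable : mnp2 = crossTable t t n f := by
  funext x y; cases x <;> cases y <;> rfl

theorem mnp1_eq_meet_crossTable :
    mnp1 = fun x y => meet (crossTable t b n f x y) (crossTable t b n f t y) := by
  funext x y; cases x <;> cases y <;> rfl

theorem crossTable_eq_meet_join (g : DM4 → DM4 → DM4) :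
    crossTable (join n (g t n)) (join b (g t b)) (meet n (g n b)) (meet b (g b n)) =
      fun x y => meet (exclMid x) (join (meet (exclMid x) (exclMid y)) (g (exclMid x) y)) := by
  funext x y
  cases x <;> cases y <;> simp only [crossTable, exclMid, neg, meet, join] <;>
    generalize g _ _ = v <;> cases v <;> rfl

theorem join_b_eq_t_or_b (u : DM4) : join b u = t ∨ join b u = b := by
  cases u <;> simp [join]

theorem meet_n_eq_n_or_f (u : DM4) : meet n u = n ∨ meet n u = f := by
  cases u <;> simp [meet]

namespace IsBinaryClone

variable {F : Set (DM4 → DM4 → DM4)} {g : DM4 → DM4 → DM4} {u v u' v' : DM4}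

theorem preimage_conjugate (hF : IsBinaryClone F) : IsBinaryClone (conjugate ⁻¹' F) where
  fst_mem := by simpa using hF.fst_mem
  snd_mem := by simpa using hF.snd_mem
  top_mem := by simpa using hF.top_mem
  neg_mem := by simpa using hF.neg_mem
  meet_mem := by simpa using hF.meet_mem
  join_mem := by simpa using hF.join_mem
  comp_mem hg hh hk := by simpa using hF.comp_mem hg hh hk

theorem sep_conjugate_eq_self (hF : IsBinaryClone F) : IsBinaryClone {g ∈ F | conjugate g = g} where
  fst_mem := ⟨hF.fst_mem, conjugate_fst⟩
  snd_mem := ⟨hF.snd_mem, conjugate_snd⟩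
  top_mem := ⟨hF.top_mem, conjugate_top⟩
  neg_mem := ⟨hF.neg_mem, conjugate_neg⟩
  meet_mem := ⟨hF.meet_mem, conjugate_meet⟩
  join_mem := ⟨hF.join_mem, conjugate_join⟩
  comp_mem hg hh hk := ⟨hF.comp_mem hg.1 hh.1 hk.1, by rw [conjugate_comp, hg.2, hh.2, hk.2]⟩

theorem realizes_apply (hF : IsBinaryClone F) (hg : g ∈ F) (h : Realizes F u v)
    (h' : Realizes F u' v') : Realizes F (g u u') (g v v') := by
  obtain ⟨p, hp, rfl, rfl⟩ := h
  obtain ⟨q, hq, rfl, rfl⟩ := h'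
  exact ⟨_, hF.comp_mem hg hp hq, rfl, rfl⟩

theorem realizes_neg (hF : IsBinaryClone F) (h : Realizes F u v) :
    Realizes F (neg u) (neg v) :=
  hF.realizes_apply hF.neg_mem h h

theorem realizes_meet (hF : IsBinaryClone F) (h : Realizes F u v) (h' : Realizes F u' v') :
    Realizes F (meet u u') (meet v v') :=
  hF.realizes_apply hF.meet_mem h h'

theorem realizes_t_b (hF : IsBinaryClone F) : Realizes F t b :=
  ⟨_, hF.fst_mem, rfl, rfl⟩

theorem realizes_n_n (hF : IsBinaryClone F) : Realizes F n n :=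
  ⟨_, hF.snd_mem, rfl, rfl⟩

theorem realizes_n_t (hF : IsBinaryClone F) : Realizes F n t :=
  hF.realizes_neg (hF.realizes_meet hF.realizes_t_b hF.realizes_n_n)

theorem realizes_of_ile (hF : IsBinaryClone F) (h : ile u v) (hu : u ≠ b) : Realizes F u v := by
  have htt : Realizes F t t := ⟨_, hF.top_mem, rfl, rfl⟩
  have hnb : Realizes F n b := hF.realizes_meet hF.realizes_n_t hF.realizes_t_b
  obtain rfl | rfl | rfl := h
  · cases u with
    | t => exact htt
    | f => exact hF.realizes_neg htt
    | n => exact hF.realizes_n_n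
    | b => exact absurd rfl hu
  · cases v with
    | t => exact hF.realizes_n_t
    | f => exact hF.realizes_neg hF.realizes_n_t
    | n => exact hF.realizes_n_n
    | b => exact hnb
  · cases u with
    | t => exact hF.realizes_t_b
    | f => exact hF.realizes_neg hF.realizes_t_b
    | n => exact hnb
    | b => exact absurd rfl hu

theorem realizes_t_f_of_not_ile (hF : IsBinaryClone F) (huv : Realizes F u v) (h : ¬ ile u v) :
    Realizes F t f := by
  have of_tn (h : Realizes F t n) : Realizes F t f := hF.realizes_meet h hF.realizes_t_b
  have of_bt (h : Realizes F b t) : Realizes F t f :=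
    hF.realizes_neg (hF.realizes_meet h hF.realizes_n_t)
  cases u <;> cases v <;> simp only [ile, reduceCtorEq, or_true, or_false, not_true_eq_false] at h
  case t.f => exact huv
  case t.n => exact of_tn huv
  case f.t => exact hF.realizes_neg huv
  case f.n => exact of_tn (hF.realizes_neg huv)
  case b.t => exact of_bt huv
  case b.f => exact of_bt (hF.realizes_neg huv)
  case b.n => exact of_tn (hF.realizes_neg (hF.realizes_meet huv hF.realizes_n_t))

theorem realizes_t_f_of_forall_ne_b (hF : IsBinaryClone F) (hg : g ∈ F) {x y : Fin 2 → DM4}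
    (hxy : ∀ i, ile (x i) (y i)) (hx : ∀ i, x i ≠ b) (h : ¬ ile (toF2 g x) (toF2 g y)) :
    Realizes F t f :=
  have hreal (i : Fin 2) : Realizes F (x i) (y i) := hF.realizes_of_ile (hxy i) (hx i)
  hF.realizes_t_f_of_not_ile (hF.realizes_apply hg (hreal 0) (hreal 1)) h

theorem realizes_t_f_or_of_not_persistent (hF : IsBinaryClone F) (hg : g ∈ F)
    (h : ¬ Persistent (toF2 g)) : Realizes F t f ∨ Realizes (conjugate ⁻¹' F) t f := by
  simp only [Persistent, not_forall] at h
  obtain ⟨x, y, hxy, h⟩ := h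
  have hne : x ≠ y := by rintro rfl; exact h (ile_refl _)
  refine (forall_ne_b_or_forall_ne_n hxy hne).imp
    (fun hx => hF.realizes_t_f_of_forall_ne_b hg hxy hx h) fun hy => ?_
  have hg' : conjugate g ∈ conjugate ⁻¹' F := by simpa using hg
  refine hF.preimage_conjugate.realizes_t_f_of_forall_ne_b hg' (x := conf ∘ y) (y := conf ∘ x)
    (fun i => ile_conf_iff.2 (hxy i)) (fun i hi => hy i ?_) ?_
  · exact (conf_conf _).symm.trans (congrArg conf hi)
  · simpa [toF2, conjugate, conf_conf, ile_conf_iff] using h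

theorem crossTable_mem (hF : IsBinaryClone F) (hg : g ∈ F) :
    crossTable (join n (g t n)) (join b (g t b)) (meet n (g n b))
      (meet b (g b n)) ∈ F := by
  have hx : (fun x _ => exclMid x) ∈ F := hF.comp_mem hF.join_mem hF.fst_mem hF.neg_mem
  have hy : (fun _ y => exclMid y) ∈ F :=
    hF.comp_mem hF.join_mem hF.snd_mem (hF.comp_mem hF.neg_mem hF.snd_mem hF.snd_mem)
  rw [crossTable_eq_meet_join]
  exact hF.comp_mem hF.meet_mem hx
    (hF.comp_mem hF.join_mem (hF.comp_mem hF.meet_mem hx hy) (hF.comp_mem hg hx hF.snd_mem))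

theorem mem_of_realizes_t_f (hF : IsBinaryClone F) (h : Realizes F t f) :
    mhnp2 ∈ F ∨ mnp1 ∈ F ∨ mnp2 ∈ F := by
  obtain ⟨k, hk, htn, hbn⟩ := h
  have hT : crossTable t (join b (k t b)) (meet n (k n b)) f ∈ F := by
    have hmem := hF.crossTable_mem hk
    rw [htn, hbn] at hmem
    exact hmem
  obtain htb | htb := join_b_eq_t_or_b (k t b) <;>
    obtain hnb | hnb := meet_n_eq_n_or_f (k n b) <;> rw [htb, hnb] at hT
  · exact .inr (.inr (mnp2_eq_crossTable ▸ hT))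
  · exact .inl (mhnp2_eq_crossTable ▸ hT)
  · exact .inr (.inl (mnp1_eq_meet_crossTable ▸
      hF.comp_mem hF.meet_mem hT (hF.comp_mem hT hF.top_mem hF.snd_mem)))
  · exact .inr (.inl (mnp1_eq_crossTable ▸ hT))

theorem exists_not_persistent_iff (hF : IsBinaryClone F) :
    (∃ g ∈ F, ¬ Persistent (toF2 g)) ↔
      mhnp2 ∈ F ∨ mnp1 ∈ F ∨ mnp2 ∈ F ∨ mnp3 ∈ F ∨ mnp4 ∈ F := by
  constructor
  · rintro ⟨g, hg, h⟩
    obtain hr | hr := hF.realizes_t_f_or_of_not_persistent hg h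
    · have hmem := hF.mem_of_realizes_t_f hr
      tauto
    · have hmem := hF.preimage_conjugate.mem_of_realizes_t_f hr
      simp only [Set.mem_preimage, conjugate_mhnp2, conjugate_mnp1, conjugate_mnp2] at hmem
      tauto
  · rintro (h | h | h | h | h)
    exacts [⟨_, h, not_persistent_mhnp2⟩, ⟨_, h, not_persistent_mnp1⟩,
      ⟨_, h, not_persistent_mnp2⟩, ⟨_, h, not_persistent_mnp3⟩, ⟨_, h, not_persistent_mnp4⟩]

theorem exists_harmonious_not_persistent_iff (hF : IsBinaryClone F) :
    (∃ g ∈ F, Harmonious (toF2 g) ∧ ¬ Persistent (toF2 g)) ↔ mhnp2 ∈ F := by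
  have hne₁₃ : mnp1 ≠ mnp3 := fun h => nomatch congrFun₂ h t n
  have hne₂₄ : mnp2 ≠ mnp4 := fun h => nomatch congrFun₂ h b n
  have conjugate_mnp3 : conjugate mnp3 = mnp1 := by rw [← conjugate_mnp1, conjugate_conjugate]
  have conjugate_mnp4 : conjugate mnp4 = mnp2 := by rw [← conjugate_mnp2, conjugate_conjugate]
  simpa [harmonious_toF2_iff, and_assoc, conjugate_mnp3, conjugate_mnp4, hne₁₃, hne₁₃.symm,
    hne₂₄, hne₂₄.symm] using hF.sep_conjugate_eq_self.exists_not_persistent_iff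

end IsBinaryClone

/-- A clone above DMA contains a binary non-persistent function
iff it contains one of mhnp², mnp²₁, mnp²₂, mnp²₃, mnp²₄; it contains a binary
harmonious non-persistent function iff it contains mhnp². -/
theorem binary_non_persistent (C : ∀ k : ℕ, Set (DMFun k))
    (hC : IsClone C) (hDMA : ∀ k g, InClone DMAGen k g → g ∈ C k) :
    ((∃ g ∈ C 1, ¬ Persistent g) ↔
      (toF2 mhnp2 ∈ C 1 ∨ toF2 mnp1 ∈ C 1 ∨ toF2 mnp2 ∈ C 1 ∨
        toF2 mnp3 ∈ C 1 ∨ toF2 mnp4 ∈ C 1)) ∧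
    ((∃ g ∈ C 1, Harmonious g ∧ ¬ Persistent g) ↔ toF2 mhnp2 ∈ C 1) := by
  have hF := hC.isBinaryClone_binaryPart hDMA
  simp only [toF2_surjective.exists]
  exact ⟨hF.exists_not_persistent_iff, hF.exists_harmonious_not_persistent_iff⟩

end DM4
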